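/- Let N = kn, let D̂ ∈ S^{N+1} be the matrix with zero 0-th row and column and lower-right block D ∈ S^N, let J be the gangster index set, let Y = { Y ∈ S^{N+1} : Y_{00} = 1, Y_{ij} = 0 for (i,j) ∈ J, Y_{ii} = Y_{0i} for i = 1..N, 0 ≤ Y_{ij} ≤ 1 for all i,j }, let R = { R ∈ S^{N+1−k} : R ⪰ 0, trace(R) = k+1 }, and let V ∈ ℝ^{(N+1)×(N+1−k)} satisfy VᵀV = I. Then for every Z ∈ S^{N+1} and every pair (Y,R) with Y = V R Vᵀ, Y ∈ Y, R ∈ R, one has ⟨D̂, Y⟩ ≥ inf_{Y' ∈ Y} ⟨D̂ + Z, Y'⟩ − (k+1) λ_max(Vᵀ Z V). In particular the right-hand side is a lower bound on the optimal value p*_DNN of the DNN relaxation for every Z. -/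

import Mathlib

open Matrix

/-!
Lagrangian weak duality. For a feasible pair, `⟨D̂, Y⟩ = ⟨D̂ + Z, Y⟩ - ⟨Z, Y⟩`. The first term is at
least the infimum over `Yset`, which is a genuine infimum because the entries of members of `Yset`
lie in `[0, 1]` (`neg_sum_abs_le_trace_mul`). The second is
`⟨Z, V R Vᵀ⟩ = ⟨Vᵀ Z V, R⟩ ≤ λ_max(Vᵀ Z V) · trace R`, by diagonalizing `Vᵀ Z V`
(`trace_mul_le_iSup_eigenvalues_mul_trace`).
-/

/-- In an orthonormal eigenbasis of `M`, `trace (M * R)` is the sum of the eigenvalues of `M` weighted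
by the diagonal entries of `R`, which are nonnegative and sum to `trace R`. -/
lemma trace_mul_le_iSup_eigenvalues_mul_trace {m : Type*} [Fintype m] [DecidableEq m]
    {M R : Matrix m m ℝ} (hM : M.IsHermitian) (hR : R.PosSemidef) :
    (M * R).trace ≤ (⨆ i, hM.eigenvalues i) * R.trace := by
  set U : Matrix m m ℝ := (hM.eigenvectorUnitary : Matrix m m ℝ) with hU
  have hUU : U * Uᴴ = 1 := Unitary.coe_mul_star_self hM.eigenvectorUnitary
  have hspec : M = U * diagonal hM.eigenvalues * Uᴴ := by
    have h := hM.spectral_theorem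
    rw [Unitary.conjStarAlgAut_apply] at h
    exact h
  have hS : (Uᴴ * R * U).PosSemidef := hR.conjTranspose_mul_mul_same U
  have htrR : R.trace = (Uᴴ * R * U).trace := by
    rw [Matrix.trace_mul_comm, ← Matrix.mul_assoc, hUU, Matrix.one_mul]
  have htrMR : (M * R).trace = (diagonal hM.eigenvalues * (Uᴴ * R * U)).trace := by
    conv_lhs => rw [hspec]
    rw [Matrix.mul_assoc, Matrix.mul_assoc, Matrix.trace_mul_comm]
    simp only [Matrix.mul_assoc]
  rw [htrMR, htrR]
  simp only [Matrix.trace, Matrix.diag_apply, Matrix.diagonal_mul, Finset.mul_sum]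
  exact Finset.sum_le_sum fun i _ => mul_le_mul_of_nonneg_right
    (le_ciSup (Set.finite_range hM.eigenvalues).bddAbove i) hS.diag_nonneg

lemma neg_sum_abs_le_trace_mul {m : Type*} [Fintype m] (C Y : Matrix m m ℝ)
    (hY : ∀ a b, 0 ≤ Y a b ∧ Y a b ≤ 1) :
    -(∑ a, ∑ b, |C a b|) ≤ (C * Y).trace := by
  simp only [Matrix.trace, Matrix.diag_apply, Matrix.mul_apply, ← Finset.sum_neg_distrib]
  refine Finset.sum_le_sum fun a _ => Finset.sum_le_sum fun b _ => ?_
  obtain ⟨h0, h1⟩ := hY b a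
  nlinarith [neg_abs_le (C a b), abs_nonneg (C a b)]

/-- weak duality bound for the facially reduced DNN relaxation:
for every symmetric `Z` and every feasible pair `(Y,R)` with `Y = VRVᵀ`, `Y ∈ 𝒴`,
`R ⪰ 0`, `trace R = k+1`, one has
`⟨D̂,Y⟩ ≥ inf_{Y' ∈ 𝒴} ⟨D̂+Z, Y'⟩ − (k+1) λ_max(VᵀZV)`.
The index `0` is `Sum.inl ()`. -/
theorem dnn_weak_duality_lower_bound
    (k n : ℕ)
    (D : Matrix (Fin k × Fin n) (Fin k × Fin n) ℝ) (hD : D.IsSymm)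
    (Dhat : Matrix (Unit ⊕ Fin k × Fin n) (Unit ⊕ Fin k × Fin n) ℝ)
    (hDhat : Dhat = Matrix.fromBlocks 0 0 0 D)
    (Yset : Set (Matrix (Unit ⊕ Fin k × Fin n) (Unit ⊕ Fin k × Fin n) ℝ))
    (hYset : Yset = {Y | Y (Sum.inl ()) (Sum.inl ()) = 1 ∧
      (∀ (s : Fin k) (i j : Fin n), i ≠ j → Y (Sum.inr (s, i)) (Sum.inr (s, j)) = 0) ∧
      (∀ p : Fin k × Fin n, Y (Sum.inr p) (Sum.inr p) = Y (Sum.inl ()) (Sum.inr p)) ∧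
      ∀ a b, 0 ≤ Y a b ∧ Y a b ≤ 1})
    (V : Matrix (Unit ⊕ Fin k × Fin n) (Fin (k * n + 1 - k)) ℝ)
    (hV : Vᵀ * V = 1)
    (Z : Matrix (Unit ⊕ Fin k × Fin n) (Unit ⊕ Fin k × Fin n) ℝ)
    (hZ : Z.IsHermitian) (hZV : (Vᵀ * Z * V).IsHermitian)
    (Y : Matrix (Unit ⊕ Fin k × Fin n) (Unit ⊕ Fin k × Fin n) ℝ)
    (R : Matrix (Fin (k * n + 1 - k)) (Fin (k * n + 1 - k)) ℝ)
    (hYR : Y = V * R * Vᵀ) (hYmem : Y ∈ Yset)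
    (hRpsd : R.PosSemidef) (hRtr : R.trace = (k : ℝ) + 1) :
    sInf {t : ℝ | ∃ Y' ∈ Yset, t = ((Dhat + Z) * Y').trace} -
        ((k : ℝ) + 1) * (⨆ i, hZV.eigenvalues i) ≤ (Dhat * Y).trace := by
  have hinf : sInf {t : ℝ | ∃ Y' ∈ Yset, t = ((Dhat + Z) * Y').trace} ≤
      ((Dhat + Z) * Y).trace := by
    refine csInf_le ⟨-(∑ a, ∑ b, |(Dhat + Z) a b|), ?_⟩ ⟨Y, hYmem, rfl⟩
    rintro t ⟨Y', hY', rfl⟩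
    rw [hYset] at hY'
    exact neg_sum_abs_le_trace_mul _ _ hY'.2.2.2
  have hZY : (Z * Y).trace = (Vᵀ * Z * V * R).trace := by
    rw [hYR, ← Matrix.mul_assoc, Matrix.trace_mul_comm]
    simp only [Matrix.mul_assoc]
  have hlam := trace_mul_le_iSup_eigenvalues_mul_trace hZV hRpsd
  rw [← hZY, hRtr] at hlam
  rw [Matrix.add_mul, Matrix.trace_add] at hinf
  linarith
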